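/- Let a_1(x), b_1(x), a_2(x), b_2(x) ∈ R and let C be the two-generator quasi-cyclic code of length 2n and index 2 generated by (a_1(x), b_1(x)) and (a_2(x), b_2(x)), i.e., the R-submodule of R^2 generated by these two pairs, viewed inside F_q^{2n}. Then C ⊆ C^{⊥s} if and only if a_1(x)b̄_1(x) - b_1(x)ā_1(x) ≡ 0 mod (x^n - 1), a_2(x)b̄_2(x) - b_2(x)ā_2(x) ≡ 0 mod (x^n - 1), and a_1(x)b̄_2(x) - b_1(x)ā_2(x) ≡ 0 mod (x^n - 1), where ā(x) denotes the transpose polynomial of a(x). -/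

import Mathlib

open Polynomial Matrix

noncomputable section

variable {F : Type*} [Field F] {n : ℕ}

/-- The symplectic inner product on `F^{2n}`. -/
def sympForm (u v : (Fin n ⊕ Fin n) → F) : F :=
  (∑ i : Fin n, u (Sum.inl i) * v (Sum.inr i)) -
    ∑ i : Fin n, v (Sum.inl i) * u (Sum.inr i)

lemma sympForm_add_left (u w v : (Fin n ⊕ Fin n) → F) :
    sympForm (u + w) v = sympForm u v + sympForm w v := by
  simp [sympForm, add_mul, mul_add, Finset.sum_add_distrib]
  ring

lemma sympForm_smul_left (c : F) (u v : (Fin n ⊕ Fin n) → F) :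
    sympForm (c • u) v = c * sympForm u v := by
  simp [sympForm, Finset.mul_sum, mul_sub, mul_assoc, mul_left_comm]

/-- The symplectic dual of a subspace of `F^{2n}`. -/
def sympDual (C : Submodule F ((Fin n ⊕ Fin n) → F)) :
    Submodule F ((Fin n ⊕ Fin n) → F) where
  carrier := {u | ∀ v ∈ C, sympForm u v = 0}
  add_mem' := by
    intro a b ha hb v hv
    rw [sympForm_add_left, ha v hv, hb v hv, add_zero]
  zero_mem' := by
    intro v hv
    have : (0 : (Fin n ⊕ Fin n) → F) = (0 : F) • 0 := by simp
    rw [this, sympForm_smul_left, zero_mul]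
  smul_mem' := by
    intro c a ha v hv
    rw [sympForm_smul_left, ha v hv, mul_zero]

/-- The `2n × 2n` symplectic matrix `Ω`. -/
def Omat (F : Type*) [Field F] (n : ℕ) : Matrix (Fin n ⊕ Fin n) (Fin n ⊕ Fin n) F :=
  Matrix.fromBlocks 0 1 (-1) 0

/-- The row space of a matrix. -/
def rowSpace {ι κ : Type*} (M : Matrix ι κ F) : Submodule F (κ → F) :=
  Submodule.span F (Set.range fun i => M i)

lemma monic_xn_sub_one (F : Type*) [Field F] {n : ℕ} (hn : n ≠ 0) :
    (X ^ n - 1 : F[X]).Monic := by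
  simpa using Polynomial.monic_X_pow_sub_C (1 : F) hn

/-- The coefficient vector of the canonical degree `< n` representative of an
element of `R = F[x]/(x^n - 1)`, as an `F`-linear map. -/
def toVecL (hn : n ≠ 0) : AdjoinRoot (X ^ n - 1 : F[X]) →ₗ[F] (Fin n → F) :=
  (LinearMap.pi fun i : Fin n => Polynomial.lcoeff F (i : ℕ)) ∘ₗ
    AdjoinRoot.modByMonicHom (monic_xn_sub_one F hn)

/-- The linear map `r ↦ (r·a, r·b)` from `R` to `F^{2n}`. -/
def QCgen (hn : n ≠ 0) (a b : AdjoinRoot (X ^ n - 1 : F[X])) :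
    AdjoinRoot (X ^ n - 1 : F[X]) →ₗ[F] ((Fin n ⊕ Fin n) → F) :=
  LinearMap.pi (Sum.elim
    (fun i => LinearMap.proj i ∘ₗ toVecL hn ∘ₗ LinearMap.mulRight F a)
    (fun i => LinearMap.proj i ∘ₗ toVecL hn ∘ₗ LinearMap.mulRight F b))

/-- The one-generator quasi-cyclic code of length `2n` and index `2`
generated by `(a(x), b(x))`, as a subspace of `F^{2n}`. -/
def QCcode (hn : n ≠ 0) (a b : AdjoinRoot (X ^ n - 1 : F[X])) :
    Submodule F ((Fin n ⊕ Fin n) → F) :=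
  LinearMap.range (QCgen hn a b)

/-- The element of `R` with coefficient vector `v`. -/
def fromVec (v : Fin n → F) : AdjoinRoot (X ^ n - 1 : F[X]) :=
  AdjoinRoot.mk _ (∑ i : Fin n, Polynomial.C (v i) * X ^ (i : ℕ))

/-- The transpose polynomial `ā(x) = x^n a(x⁻¹) mod (x^n - 1)`. -/
def transposePoly (hn : n ≠ 0) (a : AdjoinRoot (X ^ n - 1 : F[X])) :
    AdjoinRoot (X ^ n - 1 : F[X]) :=
  fromVec (fun i => toVecL hn a (-i))

/-- The cyclic code of length `n` generated by (the image of) `g(x)`. -/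
def cyclicCode (hn : n ≠ 0) (g : F[X]) : Submodule F (Fin n → F) :=
  LinearMap.range (toVecL hn ∘ₗ
    LinearMap.mulRight F (AdjoinRoot.mk (X ^ n - 1 : F[X]) g))

/-- The Hamming weight of a vector. -/
def hWeight {ι : Type*} (u : ι → F) : ℕ := {i | u i ≠ 0}.ncard


section helpers

local notation "RR" => AdjoinRoot (X ^ n - 1 : F[X])

lemma aux_root_pow : (AdjoinRoot.root (X ^ n - 1 : F[X])) ^ n = 1 := by
  have h := AdjoinRoot.mk_self (f := (X ^ n - 1 : F[X]))
  rw [map_sub, map_pow, AdjoinRoot.mk_X, map_one, sub_eq_zero] at h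
  exact h

lemma aux_root_pow_congr {i j : ℕ} (h : i ≡ j [MOD n]) :
    (AdjoinRoot.root (X ^ n - 1 : F[X])) ^ i = AdjoinRoot.root (X ^ n - 1 : F[X]) ^ j := by
  rw [pow_eq_pow_mod i aux_root_pow, pow_eq_pow_mod j aux_root_pow, h]

lemma aux_fromVec (v : Fin n → F) :
    fromVec v = ∑ i : Fin n, v i • (AdjoinRoot.root (X ^ n - 1 : F[X])) ^ (i : ℕ) := by
  simp [fromVec, map_sum, Algebra.smul_def, AdjoinRoot.algebraMap_eq]

lemma aux_degree (hn : n ≠ 0) : (X ^ n - 1 : F[X]).degree = n := by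
  simpa using Polynomial.degree_X_pow_sub_C (Nat.pos_of_ne_zero hn) (1 : F)

lemma aux_fromVec_toVec (hn : n ≠ 0) (a : RR) : fromVec (toVecL hn a) = a := by
  obtain ⟨p, rfl⟩ := AdjoinRoot.mk_surjective a
  have hlt : (p %ₘ (X ^ n - 1 : F[X])).degree < n := by
    rw [← aux_degree (F := F) hn]
    exact degree_modByMonic_lt p (monic_xn_sub_one F hn)
  have h1 : (∑ i : Fin n, C ((p %ₘ (X ^ n - 1 : F[X])).coeff i) * X ^ (i : ℕ))
      = p %ₘ (X ^ n - 1 : F[X]) := by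
    rw [Fin.sum_univ_eq_sum_range
      (fun i => C ((p %ₘ (X ^ n - 1 : F[X])).coeff i) * X ^ i) n]
    refine (as_sum_range_C_mul_X_pow' _ ?_).symm
    by_cases h0 : p %ₘ (X ^ n - 1 : F[X]) = 0
    · rw [h0]; simpa using Nat.pos_of_ne_zero hn
    · exact (natDegree_lt_iff_degree_lt h0).2 hlt
  simp only [fromVec, toVecL, LinearMap.comp_apply, LinearMap.pi_apply, lcoeff_apply,
    AdjoinRoot.modByMonicHom_mk]
  rw [h1]
  exact AdjoinRoot.mk_leftInverse (monic_xn_sub_one F hn) (AdjoinRoot.mk _ p) |> fun h => by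
    simpa [AdjoinRoot.modByMonicHom_mk] using h

lemma aux_expand (hn : n ≠ 0) (a : RR) :
    a = ∑ i : Fin n, toVecL hn a i • (AdjoinRoot.root (X ^ n - 1 : F[X])) ^ (i : ℕ) := by
  rw [← aux_fromVec, aux_fromVec_toVec]

lemma aux_toVec_root (hn : n ≠ 0) (i j : Fin n) :
    toVecL hn ((AdjoinRoot.root (X ^ n - 1 : F[X])) ^ (i : ℕ)) j = if j = i then 1 else 0 := by
  have : (AdjoinRoot.root (X ^ n - 1 : F[X])) ^ (i : ℕ) = AdjoinRoot.mk _ (X ^ (i : ℕ)) := by simp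
  rw [this]
  simp only [toVecL, LinearMap.comp_apply, LinearMap.pi_apply, lcoeff_apply,
    AdjoinRoot.modByMonicHom_mk]
  rw [(modByMonic_eq_self_iff (monic_xn_sub_one F hn)).2, coeff_X_pow]
  · simp [Fin.ext_iff]
  · rw [aux_degree hn, degree_X_pow]
    exact_mod_cast i.2

/-- coefficient at zero -/
def auxEps (hn : n ≠ 0) (a : RR) : F := toVecL hn a ⟨0, Nat.pos_of_ne_zero hn⟩

lemma auxEps_root (hn : n ≠ 0) (k : ℕ) :
    auxEps hn ((AdjoinRoot.root (X ^ n - 1 : F[X])) ^ k) = if n ∣ k then 1 else 0 := by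
  have hk : k % n < n := Nat.mod_lt _ (Nat.pos_of_ne_zero hn)
  rw [pow_eq_pow_mod k aux_root_pow, auxEps]
  rw [aux_toVec_root hn ⟨k % n, hk⟩]
  simp only [Fin.mk.injEq, Nat.dvd_iff_mod_eq_zero, eq_comm]

/-- The involution as algebra homomorphism -/
def auxBar (F : Type*) [Field F] (n : ℕ) :
    AdjoinRoot (X ^ n - 1 : F[X]) →ₐ[F] AdjoinRoot (X ^ n - 1 : F[X]) :=
  AdjoinRoot.liftAlgHom (X ^ n - 1 : F[X]) (Algebra.ofId F _)
    ((AdjoinRoot.root (X ^ n - 1 : F[X])) ^ (n - 1)) (by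
      have h : ((AdjoinRoot.root (X ^ n - 1 : F[X])) ^ (n - 1)) ^ n = 1 := by
        rw [← pow_mul, mul_comm, pow_mul, aux_root_pow, one_pow]
      simp [h])

lemma auxBar_root : auxBar F n (AdjoinRoot.root (X ^ n - 1 : F[X]))
    = (AdjoinRoot.root (X ^ n - 1 : F[X])) ^ (n - 1) := by
  simp [auxBar]

lemma aux_transpose (hn : n ≠ 0) (a : RR) : transposePoly hn a = auxBar F n a := by
  have hneg : Function.Involutive (fun i : Fin n => -i) := by
    have : NeZero n := ⟨hn⟩
    intro i
    exact neg_neg i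
  conv_rhs => rw [aux_expand hn a]
  rw [transposePoly, aux_fromVec, map_sum, ← Equiv.sum_comp (hneg.toPerm _)]
  refine Finset.sum_congr rfl fun i _ => ?_
  have h2 : - ((hneg.toPerm _) i) = i := hneg i
  rw [h2, map_smul, map_pow, auxBar_root, ← pow_mul]
  congr 1
  apply aux_root_pow_congr
  have h3 : (((hneg.toPerm _) i : Fin n) : ℕ) = (n - i) % n := by
    change ((-i : Fin n) : ℕ) = _
    exact Fin.val_neg' i
  rw [h3]
  refine (Nat.mod_modEq _ _).trans ?_
  have hi : (i : ℕ) ≤ n := i.2.le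
  apply Nat.ModEq.add_right_cancel' (i : ℕ)
  rw [Nat.sub_add_cancel hi]
  have : (n - 1) * (i : ℕ) + i = n * i := by
    obtain ⟨m, rfl⟩ := Nat.exists_eq_succ_of_ne_zero hn
    simp; ring
  rw [this]
  simp [Nat.ModEq]

lemma aux_dot (hn : n ≠ 0) (u v : RR) :
    ∑ i : Fin n, toVecL hn u i * toVecL hn v i = auxEps hn (u * auxBar F n v) := by
  conv_rhs => rw [aux_expand hn u, aux_expand hn v]
  have key : ∀ i j : Fin n, n ∣ (i : ℕ) + (n - 1) * j ↔ i = j := by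
    intro i j
    constructor
    · intro h
      have h1 : (i : ℕ) + (n - 1) * j + j = i + n * j := by
        obtain ⟨m, rfl⟩ := Nat.exists_eq_succ_of_ne_zero hn
        simp; ring
      have h2 : (i : ℕ) ≡ j [MOD n] := by
        have h3 : (i : ℕ) + (n - 1) * j + j ≡ 0 + j [MOD n] :=
          ((Nat.modEq_zero_iff_dvd).2 h).add_right _
        rw [h1, zero_add] at h3
        simpa [Nat.ModEq] using h3
      exact Fin.ext (Nat.ModEq.eq_of_lt_of_lt h2 i.2 j.2)
    · rintro rfl
      obtain ⟨m, rfl⟩ := Nat.exists_eq_succ_of_ne_zero hn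
      refine ⟨i, ?_⟩
      simp; ring
  have e : ∀ i j : Fin n, auxEps hn
      ((AdjoinRoot.root (X ^ n - 1 : F[X])) ^ ((i : ℕ) + (n - 1) * j)) = if i = j then 1 else 0 := by
    intro i j
    rw [auxEps_root]
    simp only [key]
  simp only [auxEps] at e ⊢
  simp only [map_sum, map_smul, map_pow, auxBar_root, Finset.sum_mul_sum, smul_mul_smul_comm,
    ← pow_mul, ← pow_add, Finset.sum_apply, Pi.smul_apply, e, smul_eq_mul]
  simp

lemma aux_nondeg (hn : n ≠ 0) (c : RR) (h : ∀ r : RR, auxEps hn (r * c) = 0) : c = 0 := by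
  rw [aux_expand hn c]
  refine Finset.sum_eq_zero fun i _ => ?_
  have := h (auxBar F n ((AdjoinRoot.root (X ^ n - 1 : F[X])) ^ (i : ℕ)))
  rw [mul_comm, ← aux_dot] at this
  simp only [aux_toVec_root] at this
  simp at this
  rw [this, zero_smul]

lemma aux_symp (hn : n ≠ 0) (a b a' b' r s : RR) :
    sympForm (QCgen hn a b r) (QCgen hn a' b' s) =
      auxEps hn (r * auxBar F n s * (a * auxBar F n b' - b * auxBar F n a')) := by
  have e1 : sympForm (QCgen hn a b r) (QCgen hn a' b' s) =
      (∑ i, toVecL hn (r * a) i * toVecL hn (s * b') i) -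
        ∑ i, toVecL hn (r * b) i * toVecL hn (s * a') i := by
    simp [sympForm, QCgen, mul_comm]
  rw [e1, aux_dot, aux_dot]
  simp only [auxEps]
  rw [← Pi.sub_apply, ← map_sub]
  refine congrArg (fun z => toVecL hn z _) ?_
  simp only [map_mul]
  ring

lemma aux_iff (hn : n ≠ 0) (a b a' b' : RR) :
    (∀ r s, sympForm (QCgen hn a b r) (QCgen hn a' b' s) = 0) ↔
      a * transposePoly hn b' - b * transposePoly hn a' = 0 := by
  simp only [aux_symp, aux_transpose]
  constructor
  · intro h
    refine aux_nondeg hn _ fun r => ?_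
    simpa using h r 1
  · intro h r s
    rw [h]; simp [auxEps]

lemma aux_symp_swap (u v : (Fin n ⊕ Fin n) → F) : sympForm u v = - sympForm v u := by
  simp [sympForm]

end helpers

/-- The two-generator QC code generated by `(a₁(x), b₁(x))`
and `(a₂(x), b₂(x))` is symplectic self-orthogonal iff
`a₁b̄₁ - b₁ā₁ ≡ 0`, `a₂b̄₂ - b₂ā₂ ≡ 0` and `a₁b̄₂ - b₁ā₂ ≡ 0 mod (xⁿ - 1)`. -/
theorem twoGenQC_selfOrthogonal_iff_poly
    {F : Type*} [Field F] [Fintype F] {n : ℕ} (hn : n ≠ 0)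
    (a₁ b₁ a₂ b₂ : AdjoinRoot (X ^ n - 1 : F[X]))
    (C : Submodule F ((Fin n ⊕ Fin n) → F))
    (hC : C = QCcode hn a₁ b₁ ⊔ QCcode hn a₂ b₂) :
    C ≤ sympDual C ↔
      a₁ * transposePoly hn b₁ - b₁ * transposePoly hn a₁ = 0 ∧
        a₂ * transposePoly hn b₂ - b₂ * transposePoly hn a₂ = 0 ∧
          a₁ * transposePoly hn b₂ - b₁ * transposePoly hn a₂ = 0 := by
  subst hC
  rw [← aux_iff, ← aux_iff, ← aux_iff]
  constructor
  · intro h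
    have g : ∀ u ∈ QCcode hn a₁ b₁ ⊔ QCcode hn a₂ b₂,
        ∀ v ∈ QCcode hn a₁ b₁ ⊔ QCcode hn a₂ b₂, sympForm u v = 0 := fun u hu => h hu
    have m1 : ∀ r, QCgen hn a₁ b₁ r ∈ QCcode hn a₁ b₁ ⊔ QCcode hn a₂ b₂ :=
      fun r => Submodule.mem_sup_left ⟨r, rfl⟩
    have m2 : ∀ r, QCgen hn a₂ b₂ r ∈ QCcode hn a₁ b₁ ⊔ QCcode hn a₂ b₂ :=
      fun r => Submodule.mem_sup_right ⟨r, rfl⟩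
    exact ⟨fun r s => g _ (m1 r) _ (m1 s), fun r s => g _ (m2 r) _ (m2 s),
      fun r s => g _ (m1 r) _ (m2 s)⟩
  · rintro ⟨h1, h2, h3⟩ u hu v hv
    obtain ⟨_, ⟨r, rfl⟩, _, ⟨s, rfl⟩, rfl⟩ := Submodule.mem_sup.1 hu
    obtain ⟨_, ⟨r', rfl⟩, _, ⟨s', rfl⟩, rfl⟩ := Submodule.mem_sup.1 hv
    rw [aux_symp_swap, sympForm_add_left, aux_symp_swap _ (_ + _), aux_symp_swap _ (_ + _),
      sympForm_add_left, sympForm_add_left, h1, h2, h3, aux_symp_swap (QCgen hn a₂ b₂ s), h3]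
    simp

end
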